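/- Fix T > 0, matrices A ∈ ℝ^{n×n}, B ∈ ℝ^{n×p}, E_ℓ ∈ ℝ^{n×m_ℓ} (ℓ = 1,…,m), x₀ ∈ ℝⁿ, u₀ ∈ ℝᵖ, continuous demands v_ℓ : ℝ → ℝ^{m_ℓ} vanishing on (−∞,0], continuous hold functions ξ_{i,k} : ℝ → ℝᵖ, a constraint matrix C ∈ ℝ^{q×n} with rows C_z and right-hand side d ∈ ℝ^q, continuously differentiable sensitivities h_ℓ : ℝ → ℝ, and ϑ > 0. With x(t; τ, α) = x̄₀(t) + Σ_{k,i} α_{i,k} x̄ᵘ_{i,k}(t) + Σ_ℓ x̄ᵛ_ℓ(t−τ_ℓ), the soft-constraint cost J'(τ, α) = Σ_ℓ h_ℓ(τ_ℓ) + Σ_z ∫₀ᵀ exp(ϑ(C_z x(t; τ, α) − d_z)) dt is continuously differentiable in (τ, α), and its partial derivative with respect to τ_ℓ equals h_ℓ'(τ_ℓ) − Σ_z ∫₀ᵀ ϑ·exp(ϑ(C_z x(t; τ, α) − d_z))·C_z(A x̄ᵛ_ℓ(t−τ_ℓ) + E_ℓ v_ℓ(t−τ_ℓ)) dt. -/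

import Mathlib

open Matrix MeasureTheory Set

/-- `x̄₀(t) = exp(At)·x₀ + ∫₀ᵗ exp(A(t−β))·B·u₀ dβ`. -/
noncomputable def xbar0 {n p : ℕ} (A : Matrix (Fin n) (Fin n) ℝ)
    (B : Matrix (Fin n) (Fin p) ℝ) (x₀ : Fin n → ℝ) (u₀ : Fin p → ℝ) (t : ℝ) : Fin n → ℝ :=
  (NormedSpace.exp (t • A)).mulVec x₀ +
    ∫ β in (0:ℝ)..t, (NormedSpace.exp ((t - β) • A)).mulVec (B.mulVec u₀)

/-- `x̄ᵘ(t) = ∫₀ᵗ exp(A(t−β))·B·ξ(β) dβ`. -/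
noncomputable def xbaru {n p : ℕ} (A : Matrix (Fin n) (Fin n) ℝ)
    (B : Matrix (Fin n) (Fin p) ℝ) (ξ : ℝ → Fin p → ℝ) (t : ℝ) : Fin n → ℝ :=
  ∫ β in (0:ℝ)..t, (NormedSpace.exp ((t - β) • A)).mulVec (B.mulVec (ξ β))

/-- `x̄ᵛ(s) = ∫₀ˢ exp(A(s−β))·E·v(β) dβ`, extended by `0` for `s < 0`. -/
noncomputable def xbarv {n m : ℕ} (A : Matrix (Fin n) (Fin n) ℝ)
    (E : Matrix (Fin n) (Fin m) ℝ) (v : ℝ → Fin m → ℝ) (s : ℝ) : Fin n → ℝ :=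
  if 0 ≤ s then
    ∫ β in (0:ℝ)..s, (NormedSpace.exp ((s - β) • A)).mulVec (E.mulVec (v β))
  else 0

/-- The parametrized state
`x(t; τ, α) = x̄₀(t) + Σ_{i,k} α_{i,k} x̄ᵘ_{i,k}(t) + Σ_ℓ x̄ᵛ_ℓ(t−τ_ℓ)`. -/
noncomputable def xstate {n p m K : ℕ} (A : Matrix (Fin n) (Fin n) ℝ)
    (B : Matrix (Fin n) (Fin p) ℝ) (x₀ : Fin n → ℝ) (u₀ : Fin p → ℝ)
    (md : Fin m → ℕ) (E : ∀ ℓ, Matrix (Fin n) (Fin (md ℓ)) ℝ)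
    (v : ∀ ℓ, ℝ → Fin (md ℓ) → ℝ) (ξ : Fin p → Fin K → ℝ → Fin p → ℝ)
    (τ : Fin m → ℝ) (α : Fin p → Fin K → ℝ) (t : ℝ) : Fin n → ℝ :=
  xbar0 A B x₀ u₀ t + (∑ i, ∑ k, α i k • xbaru A B (ξ i k) t) +
    ∑ ℓ, xbarv A (E ℓ) (v ℓ) (t - τ ℓ)

/-- The soft-constraint cost
`J'(τ,α) = Σ_ℓ h_ℓ(τ_ℓ) + Σ_z ∫₀ᵀ exp(ϑ(C_z x(t;τ,α) − d_z)) dt`. -/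
noncomputable def Jsoft {n p m K q : ℕ} (T : ℝ) (A : Matrix (Fin n) (Fin n) ℝ)
    (B : Matrix (Fin n) (Fin p) ℝ) (x₀ : Fin n → ℝ) (u₀ : Fin p → ℝ)
    (md : Fin m → ℕ) (E : ∀ ℓ, Matrix (Fin n) (Fin (md ℓ)) ℝ)
    (v : ∀ ℓ, ℝ → Fin (md ℓ) → ℝ) (ξ : Fin p → Fin K → ℝ → Fin p → ℝ)
    (C : Matrix (Fin q) (Fin n) ℝ) (d : Fin q → ℝ) (h : Fin m → ℝ → ℝ) (ϑ : ℝ)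
    (τ : Fin m → ℝ) (α : Fin p → Fin K → ℝ) : ℝ :=
  (∑ ℓ, h ℓ (τ ℓ)) + ∑ z, ∫ t in (0:ℝ)..T,
    Real.exp (ϑ * ((C z ⬝ᵥ xstate A B x₀ u₀ md E v ξ τ α t) - d z))

section helpers

theorem aux_exp_entry {n : ℕ} (A : Matrix (Fin n) (Fin n) ℝ) (i j : Fin n) (t : ℝ) :
    HasDerivAt (fun t : ℝ => (NormedSpace.exp (t • A)) i j)
      ((A * NormedSpace.exp (t • A)) i j) t := by
  let : NormedRing (Matrix (Fin n) (Fin n) ℝ) := Matrix.linftyOpNormedRing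
  let : NormedAlgebra ℝ (Matrix (Fin n) (Fin n) ℝ) := Matrix.linftyOpNormedAlgebra
  have h1 := hasDerivAt_exp_smul_const' (𝕂 := ℝ) A t
  have h2 := ((Matrix.entryLinearMap ℝ ℝ i j).toContinuousLinearMap).hasFDerivAt.comp_hasDerivAt t h1
  exact h2

theorem aux_exp_cont {n : ℕ} (A : Matrix (Fin n) (Fin n) ℝ) :
    Continuous (fun t : ℝ => NormedSpace.exp (t • A)) := by
  refine continuous_matrix fun i j => ?_
  exact continuous_iff_continuousAt.2 fun t => (aux_exp_entry A i j t).continuousAt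

theorem aux_conv_eq {n : ℕ} (A : Matrix (Fin n) (Fin n) ℝ) (g : ℝ → Fin n → ℝ)
    (hg : Continuous g) (t : ℝ) :
    (∫ β in (0:ℝ)..t, (NormedSpace.exp ((t - β) • A)).mulVec (g β)) =
      (NormedSpace.exp (t • A)).mulVec
        (∫ β in (0:ℝ)..t, (NormedSpace.exp ((-β) • A)).mulVec (g β)) := by
  have hc : Continuous fun β : ℝ => (NormedSpace.exp ((-β) • A)).mulVec (g β) :=
    ((aux_exp_cont A).comp continuous_neg).matrix_mulVec hg
  have := ((NormedSpace.exp (t • A)).mulVecLin.toContinuousLinearMap).intervalIntegral_comp_comm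
    (hc.intervalIntegrable (μ := volume) 0 t)
  simp only [LinearMap.coe_toContinuousLinearMap', Matrix.mulVecLin_apply] at this
  rw [← this]
  refine intervalIntegral.integral_congr fun β _ => ?_
  simp only [Matrix.mulVec_mulVec]
  rw [← Matrix.exp_add_of_commute, ← add_smul, sub_eq_add_neg]
  exact ((Commute.refl A).smul_left t).smul_right (-β)

theorem aux_conv_deriv {n : ℕ} (A : Matrix (Fin n) (Fin n) ℝ) (g : ℝ → Fin n → ℝ)
    (hg : Continuous g) (t : ℝ) :
    HasDerivAt (fun t => ∫ β in (0:ℝ)..t, (NormedSpace.exp ((t - β) • A)).mulVec (g β))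
      (A.mulVec (∫ β in (0:ℝ)..t, (NormedSpace.exp ((t - β) • A)).mulVec (g β)) + g t) t := by
  have hc : Continuous fun β : ℝ => (NormedSpace.exp ((-β) • A)).mulVec (g β) :=
    ((aux_exp_cont A).comp continuous_neg).matrix_mulVec hg
  have hd := hc.integral_hasStrictDerivAt 0 t |>.hasDerivAt
  have hfun := funext (aux_conv_eq A g hg)
  rw [hfun]
  rw [aux_conv_eq A g hg t]
  have hgt : g t = (NormedSpace.exp (t • A)).mulVec ((NormedSpace.exp ((-t) • A)).mulVec (g t)) := by
    rw [Matrix.mulVec_mulVec, ← Matrix.exp_add_of_commute, ← add_smul]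
    · simp
    · exact ((Commute.refl A).smul_left t).smul_right (-t)
  rw [hgt]
  set G := fun t : ℝ => ∫ β in (0:ℝ)..t, (NormedSpace.exp ((-β) • A)).mulVec (g β) with hG
  rw [hasDerivAt_pi] at hd ⊢
  intro i
  have := HasDerivAt.fun_sum (u := Finset.univ) fun j _ => (aux_exp_entry A i j t).mul (hd j)
  convert this using 1
  · rfl
  · rw [Finset.sum_add_distrib, Matrix.mulVec_mulVec]
    rfl

theorem aux_xbarv_eq {n m : ℕ} (A : Matrix (Fin n) (Fin n) ℝ)
    (E : Matrix (Fin n) (Fin m) ℝ) (v : ℝ → Fin m → ℝ) (hv0 : ∀ s ≤ (0:ℝ), v s = 0) :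
    xbarv A E v = fun s =>
      ∫ β in (0:ℝ)..s, (NormedSpace.exp ((s - β) • A)).mulVec (E.mulVec (v β)) := by
  funext s
  unfold xbarv
  split_ifs with hs
  · rfl
  · symm
    rw [intervalIntegral.integral_congr (g := fun _ => 0)]
    · simp
    · intro β hβ
      rw [uIcc_of_ge (by linarith)] at hβ
      simp [hv0 β hβ.2]

theorem aux_xbarv_deriv {n m : ℕ} (A : Matrix (Fin n) (Fin n) ℝ)
    (E : Matrix (Fin n) (Fin m) ℝ) (v : ℝ → Fin m → ℝ) (hv : Continuous v)
    (hv0 : ∀ s ≤ (0:ℝ), v s = 0) (s : ℝ) :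
    HasDerivAt (xbarv A E v) (A.mulVec (xbarv A E v s) + E.mulVec (v s)) s := by
  rw [aux_xbarv_eq A E v hv0]
  exact aux_conv_deriv A (fun β => E.mulVec (v β)) (continuous_const.matrix_mulVec hv) s

theorem aux_xbarv_cont {n m : ℕ} (A : Matrix (Fin n) (Fin n) ℝ)
    (E : Matrix (Fin n) (Fin m) ℝ) (v : ℝ → Fin m → ℝ) (hv : Continuous v)
    (hv0 : ∀ s ≤ (0:ℝ), v s = 0) : Continuous (xbarv A E v) :=
  continuous_iff_continuousAt.2 fun s => (aux_xbarv_deriv A E v hv hv0 s).continuousAt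

theorem aux_xbaru_cont {n p : ℕ} (A : Matrix (Fin n) (Fin n) ℝ)
    (B : Matrix (Fin n) (Fin p) ℝ) (ξ : ℝ → Fin p → ℝ) (hξ : Continuous ξ) :
    Continuous (xbaru A B ξ) :=
  continuous_iff_continuousAt.2 fun s =>
    (aux_conv_deriv A (fun β => B.mulVec (ξ β)) (continuous_const.matrix_mulVec hξ) s).continuousAt

theorem aux_xbar0_cont {n p : ℕ} (A : Matrix (Fin n) (Fin n) ℝ)
    (B : Matrix (Fin n) (Fin p) ℝ) (x₀ : Fin n → ℝ) (u₀ : Fin p → ℝ) :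
    Continuous (xbar0 A B x₀ u₀) :=
  ((aux_exp_cont A).matrix_mulVec continuous_const).add
    (aux_xbaru_cont A B (fun _ => u₀) continuous_const)

/-- Differentiation under the integral sign for jointly continuous data. -/
theorem aux_param {H : Type*} [NormedAddCommGroup H] [NormedSpace ℝ H] [FiniteDimensional ℝ H]
    (T : ℝ) (F : H → ℝ → ℝ) (F' : H → ℝ → H →L[ℝ] ℝ)
    (hF : Continuous (Function.uncurry F)) (hF' : Continuous (Function.uncurry F'))
    (hd : ∀ y t, HasFDerivAt (fun y => F y t) (F' y t) y) :
    Continuous (fun y => ∫ t in (0:ℝ)..T, F' y t) ∧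
    ∀ y, HasFDerivAt (fun y => ∫ t in (0:ℝ)..T, F y t) (∫ t in (0:ℝ)..T, F' y t) y := by
  refine ⟨intervalIntegral.continuous_parametric_intervalIntegral_of_continuous' hF' 0 T, ?_⟩
  intro y
  have : ProperSpace H := FiniteDimensional.proper ℝ H
  obtain ⟨M, hM⟩ := ((isCompact_closedBall y 1).prod (isCompact_uIcc (a := (0:ℝ)) (b := T))).exists_bound_of_continuousOn
    (f := Function.uncurry F') hF'.continuousOn
  have c1 : ∀ y, Continuous (F y) := fun y => hF.comp (Continuous.prodMk_right y)
  have c2 : ∀ y, Continuous (F' y) := fun y => hF'.comp (Continuous.prodMk_right y)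
  refine intervalIntegral.hasFDerivAt_integral_of_dominated_of_fderiv_le (bound := fun _ => M)
    (Metric.closedBall_mem_nhds y one_pos)
    (Filter.Eventually.of_forall fun x => (c1 x).aestronglyMeasurable)
    ((c1 y).intervalIntegrable _ _) (c2 y).aestronglyMeasurable
    (Filter.Eventually.of_forall fun t ht x hx => hM (x, t) ⟨hx, uIoc_subset_uIcc ht⟩)
    intervalIntegrable_const
    (Filter.Eventually.of_forall fun t ht x hx => hd x t)

/-- Projection onto the coordinate `τ_ℓ`. -/
noncomputable def auxPt {m p K : ℕ} (ℓ : Fin m) :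
    ((Fin m → ℝ) × (Fin p → Fin K → ℝ)) →L[ℝ] ℝ :=
  (ContinuousLinearMap.proj (R := ℝ) (φ := fun _ : Fin m => ℝ) ℓ).comp
    (ContinuousLinearMap.fst ℝ (Fin m → ℝ) (Fin p → Fin K → ℝ))

/-- Projection onto the coordinate `α_{i,k}`. -/
noncomputable def auxPa {m p K : ℕ} (i : Fin p) (k : Fin K) :
    ((Fin m → ℝ) × (Fin p → Fin K → ℝ)) →L[ℝ] ℝ :=
  (ContinuousLinearMap.proj (R := ℝ) (φ := fun _ : Fin K => ℝ) k).comp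
    ((ContinuousLinearMap.proj (R := ℝ) (φ := fun _ : Fin p => Fin K → ℝ) i).comp
      (ContinuousLinearMap.snd ℝ (Fin m → ℝ) (Fin p → Fin K → ℝ)))

/-- Derivative of `c ⬝ᵥ x(t; τ, α)` in `(τ, α)`. -/
noncomputable def auxL {n p m K : ℕ} (A : Matrix (Fin n) (Fin n) ℝ)
    (B : Matrix (Fin n) (Fin p) ℝ)
    (md : Fin m → ℕ) (E : ∀ ℓ, Matrix (Fin n) (Fin (md ℓ)) ℝ)
    (v : ∀ ℓ, ℝ → Fin (md ℓ) → ℝ) (ξ : Fin p → Fin K → ℝ → Fin p → ℝ)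
    (c : Fin n → ℝ) (y : (Fin m → ℝ) × (Fin p → Fin K → ℝ)) (t : ℝ) :
    ((Fin m → ℝ) × (Fin p → Fin K → ℝ)) →L[ℝ] ℝ :=
  (∑ i, ∑ k, (c ⬝ᵥ xbaru A B (ξ i k) t) • auxPa i k) +
    ∑ ℓ, (-(c ⬝ᵥ (A.mulVec (xbarv A (E ℓ) (v ℓ) (t - y.1 ℓ)) +
              (E ℓ).mulVec (v ℓ (t - y.1 ℓ))))) • auxPt ℓ

theorem aux_dot {n p m K : ℕ} (A : Matrix (Fin n) (Fin n) ℝ)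
    (B : Matrix (Fin n) (Fin p) ℝ) (x₀ : Fin n → ℝ) (u₀ : Fin p → ℝ)
    (md : Fin m → ℕ) (E : ∀ ℓ, Matrix (Fin n) (Fin (md ℓ)) ℝ)
    (v : ∀ ℓ, ℝ → Fin (md ℓ) → ℝ) (ξ : Fin p → Fin K → ℝ → Fin p → ℝ)
    (c : Fin n → ℝ) (y : (Fin m → ℝ) × (Fin p → Fin K → ℝ)) (t : ℝ) :
    c ⬝ᵥ xstate A B x₀ u₀ md E v ξ y.1 y.2 t =
      c ⬝ᵥ xbar0 A B x₀ u₀ t + (∑ i, ∑ k, (c ⬝ᵥ xbaru A B (ξ i k) t) * y.2 i k) +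
        ∑ ℓ, c ⬝ᵥ xbarv A (E ℓ) (v ℓ) (t - y.1 ℓ) := by
  simp only [xstate, dotProduct_add, dotProduct_sum, dotProduct_smul, smul_eq_mul, mul_comm]

theorem aux_dot_deriv {n p m K : ℕ} (A : Matrix (Fin n) (Fin n) ℝ)
    (B : Matrix (Fin n) (Fin p) ℝ) (x₀ : Fin n → ℝ) (u₀ : Fin p → ℝ)
    (md : Fin m → ℕ) (E : ∀ ℓ, Matrix (Fin n) (Fin (md ℓ)) ℝ)
    (v : ∀ ℓ, ℝ → Fin (md ℓ) → ℝ) (hv : ∀ ℓ, Continuous (v ℓ))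
    (hv0 : ∀ ℓ, ∀ s ≤ (0:ℝ), v ℓ s = 0) (ξ : Fin p → Fin K → ℝ → Fin p → ℝ)
    (c : Fin n → ℝ) (y : (Fin m → ℝ) × (Fin p → Fin K → ℝ)) (t : ℝ) :
    HasFDerivAt (fun y : (Fin m → ℝ) × (Fin p → Fin K → ℝ) =>
      c ⬝ᵥ xstate A B x₀ u₀ md E v ξ y.1 y.2 t) (auxL A B md E v ξ c y t) y := by
  simp only [aux_dot]
  refine HasFDerivAt.add (HasFDerivAt.const_add _ ?_) ?_
  · refine HasFDerivAt.fun_sum fun i _ => HasFDerivAt.fun_sum fun k _ => ?_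
    exact (auxPa (m := m) i k).hasFDerivAt.const_mul _
  · refine HasFDerivAt.fun_sum fun ℓ _ => ?_
    have h1 : HasDerivAt (fun s => c ⬝ᵥ xbarv A (E ℓ) (v ℓ) s)
        (c ⬝ᵥ (A.mulVec (xbarv A (E ℓ) (v ℓ) (t - y.1 ℓ)) +
              (E ℓ).mulVec (v ℓ (t - y.1 ℓ)))) (t - y.1 ℓ) := by
      have := aux_xbarv_deriv A (E ℓ) (v ℓ) (hv ℓ) (hv0 ℓ) (t - y.1 ℓ)
      rw [hasDerivAt_pi] at this
      exact HasDerivAt.fun_sum fun j _ => (this j).const_mul (c j)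
    have h2 : HasFDerivAt (fun y : (Fin m → ℝ) × (Fin p → Fin K → ℝ) => t - y.1 ℓ)
        (-(auxPt ℓ)) y := (auxPt (p := p) (K := K) ℓ).hasFDerivAt.const_sub t
    have h3 := h1.comp_hasFDerivAt y h2
    exact h3.congr_fderiv (ContinuousLinearMap.ext fun w => by
      simp
      ring)

theorem aux_dot_cont {n p m K : ℕ} (A : Matrix (Fin n) (Fin n) ℝ)
    (B : Matrix (Fin n) (Fin p) ℝ) (x₀ : Fin n → ℝ) (u₀ : Fin p → ℝ)
    (md : Fin m → ℕ) (E : ∀ ℓ, Matrix (Fin n) (Fin (md ℓ)) ℝ)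
    (v : ∀ ℓ, ℝ → Fin (md ℓ) → ℝ) (hv : ∀ ℓ, Continuous (v ℓ))
    (hv0 : ∀ ℓ, ∀ s ≤ (0:ℝ), v ℓ s = 0)
    (ξ : Fin p → Fin K → ℝ → Fin p → ℝ) (hξ : ∀ i k, Continuous (ξ i k)) (c : Fin n → ℝ) :
    Continuous (fun w : ((Fin m → ℝ) × (Fin p → Fin K → ℝ)) × ℝ =>
      c ⬝ᵥ xstate A B x₀ u₀ md E v ξ w.1.1 w.1.2 w.2) := by
  simp only [aux_dot]
  have h0 := aux_xbar0_cont A B x₀ u₀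
  have hu := fun i k => aux_xbaru_cont A B (ξ i k) (hξ i k)
  have hx := fun ℓ => aux_xbarv_cont A (E ℓ) (v ℓ) (hv ℓ) (hv0 ℓ)
  refine ((continuous_const.dotProduct (h0.comp continuous_snd)).add
    (continuous_finsetSum _ fun i _ => continuous_finsetSum _ fun k _ => ?_)).add
    (continuous_finsetSum _ fun ℓ _ => ?_)
  · exact (continuous_const.dotProduct ((hu i k).comp continuous_snd)).mul (by fun_prop)
  · exact continuous_const.dotProduct ((hx ℓ).comp (by fun_prop))

theorem aux_L_cont {n p m K : ℕ} (A : Matrix (Fin n) (Fin n) ℝ)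
    (B : Matrix (Fin n) (Fin p) ℝ)
    (md : Fin m → ℕ) (E : ∀ ℓ, Matrix (Fin n) (Fin (md ℓ)) ℝ)
    (v : ∀ ℓ, ℝ → Fin (md ℓ) → ℝ) (hv : ∀ ℓ, Continuous (v ℓ))
    (hv0 : ∀ ℓ, ∀ s ≤ (0:ℝ), v ℓ s = 0)
    (ξ : Fin p → Fin K → ℝ → Fin p → ℝ) (hξ : ∀ i k, Continuous (ξ i k)) (c : Fin n → ℝ) :
    Continuous (fun w : ((Fin m → ℝ) × (Fin p → Fin K → ℝ)) × ℝ =>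
      auxL A B md E v ξ c w.1 w.2) := by
  have hu := fun i k => aux_xbaru_cont A B (ξ i k) (hξ i k)
  have hx := fun ℓ => aux_xbarv_cont A (E ℓ) (v ℓ) (hv ℓ) (hv0 ℓ)
  unfold auxL
  refine (continuous_finsetSum _ fun i _ => continuous_finsetSum _ fun k _ => ?_).add
    (continuous_finsetSum _ fun ℓ _ => ?_)
  · exact (continuous_const.dotProduct ((hu i k).comp continuous_snd)).smul continuous_const
  · have e1 : Continuous fun w : ((Fin m → ℝ) × (Fin p → Fin K → ℝ)) × ℝ =>
        A.mulVec (xbarv A (E ℓ) (v ℓ) (w.2 - w.1.1 ℓ)) :=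
      continuous_const.matrix_mulVec ((hx ℓ).comp (by fun_prop))
    have e2 : Continuous fun w : ((Fin m → ℝ) × (Fin p → Fin K → ℝ)) × ℝ =>
        (E ℓ).mulVec (v ℓ (w.2 - w.1.1 ℓ)) :=
      continuous_const.matrix_mulVec ((hv ℓ).comp (by fun_prop))
    have e3 : Continuous fun w : ((Fin m → ℝ) × (Fin p → Fin K → ℝ)) × ℝ =>
        c ⬝ᵥ (A.mulVec (xbarv A (E ℓ) (v ℓ) (w.2 - w.1.1 ℓ)) +
          (E ℓ).mulVec (v ℓ (w.2 - w.1.1 ℓ))) :=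
      continuous_const.dotProduct (e1.add e2)
    exact e3.neg.smul continuous_const

theorem aux_L_apply {n p m K : ℕ} (A : Matrix (Fin n) (Fin n) ℝ)
    (B : Matrix (Fin n) (Fin p) ℝ)
    (md : Fin m → ℕ) (E : ∀ ℓ, Matrix (Fin n) (Fin (md ℓ)) ℝ)
    (v : ∀ ℓ, ℝ → Fin (md ℓ) → ℝ)
    (ξ : Fin p → Fin K → ℝ → Fin p → ℝ) (c : Fin n → ℝ)
    (y : (Fin m → ℝ) × (Fin p → Fin K → ℝ)) (t : ℝ) (ℓ : Fin m) :
    auxL A B md E v ξ c y t (Pi.single ℓ 1, 0) =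
      -(c ⬝ᵥ (A.mulVec (xbarv A (E ℓ) (v ℓ) (t - y.1 ℓ)) +
              (E ℓ).mulVec (v ℓ (t - y.1 ℓ)))) := by
  unfold auxL auxPa auxPt
  simp only [_root_.add_apply, _root_.sum_apply,
    _root_.smul_apply, ContinuousLinearMap.comp_apply, ContinuousLinearMap.coe_fst',
    ContinuousLinearMap.coe_snd', ContinuousLinearMap.proj_apply, smul_eq_mul, Pi.zero_apply,
    mul_zero, Finset.sum_const_zero, zero_add]
  rw [Finset.sum_eq_single ℓ]
  · simp
  · intro b _ hb
    simp [hb]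
  · simp

end helpers

/-- Lemma 2 (τ-gradient): the soft-constraint cost `J'` is continuously
differentiable in `(τ, α)`, and
`∂J'/∂τ_ℓ = h_ℓ'(τ_ℓ) − Σ_z ∫₀ᵀ ϑ exp(ϑ(C_z x(t;τ,α) − d_z)) C_z(A x̄ᵛ_ℓ(t−τ_ℓ) + E_ℓ v_ℓ(t−τ_ℓ)) dt`. -/
theorem soft_cost_tau_gradient {n p m K q : ℕ} (T : ℝ) (hT : 0 < T)
    (A : Matrix (Fin n) (Fin n) ℝ) (B : Matrix (Fin n) (Fin p) ℝ)
    (x₀ : Fin n → ℝ) (u₀ : Fin p → ℝ)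
    (md : Fin m → ℕ) (E : ∀ ℓ, Matrix (Fin n) (Fin (md ℓ)) ℝ)
    (v : ∀ ℓ, ℝ → Fin (md ℓ) → ℝ) (hv : ∀ ℓ, Continuous (v ℓ))
    (hv0 : ∀ ℓ, ∀ s ≤ (0:ℝ), v ℓ s = 0)
    (ξ : Fin p → Fin K → ℝ → Fin p → ℝ) (hξ : ∀ i k, Continuous (ξ i k))
    (C : Matrix (Fin q) (Fin n) ℝ) (d : Fin q → ℝ)
    (h : Fin m → ℝ → ℝ) (hh : ∀ ℓ, ContDiff ℝ 1 (h ℓ))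
    (ϑ : ℝ) (hϑ : 0 < ϑ) :
    ContDiff ℝ 1
      (fun pr : (Fin m → ℝ) × (Fin p → Fin K → ℝ) =>
        Jsoft T A B x₀ u₀ md E v ξ C d h ϑ pr.1 pr.2) ∧
    ∀ (τ : Fin m → ℝ) (α : Fin p → Fin K → ℝ) (ℓ : Fin m),
      HasDerivAt
        (fun s : ℝ => Jsoft T A B x₀ u₀ md E v ξ C d h ϑ (Function.update τ ℓ s) α)
        (deriv (h ℓ) (τ ℓ) - ∑ z, ∫ t in (0:ℝ)..T,
          ϑ * Real.exp (ϑ * ((C z ⬝ᵥ xstate A B x₀ u₀ md E v ξ τ α t) - d z)) *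
            (C z ⬝ᵥ (A.mulVec (xbarv A (E ℓ) (v ℓ) (t - τ ℓ)) +
              (E ℓ).mulVec (v ℓ (t - τ ℓ)))))
        (τ ℓ) := by
  set F : Fin q → ((Fin m → ℝ) × (Fin p → Fin K → ℝ)) → ℝ → ℝ := fun z y t =>
    Real.exp (ϑ * ((C z ⬝ᵥ xstate A B x₀ u₀ md E v ξ y.1 y.2 t) - d z)) with hFdef
  set F' : Fin q → ((Fin m → ℝ) × (Fin p → Fin K → ℝ)) → ℝ →
      ((Fin m → ℝ) × (Fin p → Fin K → ℝ)) →L[ℝ] ℝ := fun z y t =>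
    F z y t • ϑ • auxL A B md E v ξ (C z) y t with hF'def
  have hF : ∀ z, Continuous (Function.uncurry (F z)) := fun z =>
    Real.continuous_exp.comp (continuous_const.mul
      ((aux_dot_cont A B x₀ u₀ md E v hv hv0 ξ hξ (C z)).sub continuous_const))
  have hF' : ∀ z, Continuous (Function.uncurry (F' z)) := fun z =>
    (hF z).smul ((aux_L_cont A B md E v hv hv0 ξ hξ (C z)).const_smul ϑ)
  have hd : ∀ z y t, HasFDerivAt (fun y => F z y t) (F' z y t) y := fun z y t =>
    (((aux_dot_deriv A B x₀ u₀ md E v hv hv0 ξ (C z) y t).sub_const (d z)).const_mul ϑ).exp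
  have hP := fun z => aux_param T (F z) (F' z) (hF z) (hF' z) (hd z)
  have hJ : ∀ y : (Fin m → ℝ) × (Fin p → Fin K → ℝ),
      HasFDerivAt (fun pr : (Fin m → ℝ) × (Fin p → Fin K → ℝ) =>
        Jsoft T A B x₀ u₀ md E v ξ C d h ϑ pr.1 pr.2)
        ((∑ ℓ, deriv (h ℓ) (y.1 ℓ) • auxPt ℓ) + ∑ z, ∫ t in (0:ℝ)..T, F' z y t) y := by
    intro y
    refine HasFDerivAt.add (HasFDerivAt.fun_sum fun ℓ _ => ?_)
      (HasFDerivAt.fun_sum fun z _ => (hP z).2 y)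
    exact (((hh ℓ).differentiable one_ne_zero) (y.1 ℓ)).hasDerivAt.comp_hasFDerivAt y
      (auxPt (p := p) (K := K) ℓ).hasFDerivAt
  refine ⟨contDiff_one_iff_hasFDerivAt.2 ⟨_, ?_, hJ⟩, ?_⟩
  · refine (continuous_finsetSum _ fun ℓ _ => ?_).add
      (continuous_finsetSum _ fun z _ => (hP z).1)
    exact (((hh ℓ).continuous_deriv le_rfl).comp (by fun_prop)).smul continuous_const
  · intro τ α ℓ
    have hu : HasDerivAt (fun s : ℝ => (Function.update τ ℓ s, α))
        ((Pi.single ℓ (1:ℝ) : Fin m → ℝ), (0 : Fin p → Fin K → ℝ)) (τ ℓ) :=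
      (hasDerivAt_update τ ℓ (τ ℓ)).prodMk (hasDerivAt_const _ _)
    have hJ' := hJ (Function.update τ ℓ (τ ℓ), α)
    have key := HasFDerivAt.comp_hasDerivAt (τ ℓ) hJ' hu
    refine key.congr_deriv ?_
    rw [Function.update_eq_self]
    simp only [_root_.add_apply, _root_.sum_apply, sub_eq_add_neg]
    congr 1
    · rw [Finset.sum_eq_single ℓ]
      · simp [auxPt]
      · intro b _ hb
        simp [auxPt, hb]
      · simp
    · rw [← Finset.sum_neg_distrib]
      refine Finset.sum_congr rfl fun z _ => ?_
      have hc : Continuous (F' z (τ, α)) := by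
        have h1 : Continuous fun t : ℝ => Function.uncurry (F' z) ((τ, α), t) :=
          (hF' z).comp (continuous_const.prodMk continuous_id)
        exact h1
      rw [ContinuousLinearMap.intervalIntegral_apply (hc.intervalIntegrable _ _),
        ← intervalIntegral.integral_neg]
      refine intervalIntegral.integral_congr fun t _ => ?_
      simp only [hF'def, hFdef, _root_.smul_apply, aux_L_apply, smul_eq_mul]
      ring_nf
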